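/- arXiv:1308.3788 — 13 statements merged into one kernel-verified Lean document; each statement's English description precedes it below -/
import Mathlib

section
/- Let n ≥ 2 be an integer and let a_1, …, a_n be real numbers satisfying ∑_{i=1}^n a_i = 0 and ∑_{i=1}^n a_i² = 𝒜. Then |∑_{i=1}^n a_i³| ≤ ((n−2)/√(n(n−1))) · 𝒜^{3/2}. -/
theorem sum_cubes_aux (n : ℕ) (hn : 2 ≤ n) (a : Fin n → ℝ) (A u : ℝ)
    (hsum : ∑ i, a i = 0) (hsq : ∑ i, (a i) ^ 2 = A) (hu : 0 ≤ u)
    (huA : u ^ 2 * (n * (n - 1)) = A) :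
    ∑ i, (a i) ^ 3 ≤ ((n : ℝ) - 2) * u * A := by
  have hn' : (2 : ℝ) ≤ n := by exact_mod_cast hn
  have hle : ∀ i, a i ≤ (n - 1) * u := by
    intro i
    have h1 := sq_sum_le_card_mul_sum_sq (s := Finset.univ.erase i) (f := a)
    have h2 := Finset.add_sum_erase Finset.univ a (Finset.mem_univ i)
    have h3 := Finset.add_sum_erase Finset.univ (fun j => a j ^ 2) (Finset.mem_univ i)
    rw [hsum] at h2
    rw [hsq] at h3
    rw [Finset.card_erase_of_mem (Finset.mem_univ i), Finset.card_univ, Fintype.card_fin,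
      Nat.cast_sub (by omega), Nat.cast_one, eq_neg_of_add_eq_zero_right h2,
      eq_sub_of_add_eq' h3, ← huA] at h1
    refine abs_le_of_sq_le_sq' ?_ (mul_nonneg (by linarith) hu) |>.2
    have h4 : (n : ℝ) * a i ^ 2 ≤ n * (((n : ℝ) - 1) * u) ^ 2 := by nlinarith
    exact le_of_mul_le_mul_left h4 (by linarith)
  have key : ∑ i, (a i - (n - 1) * u) * (a i + u) ^ 2 ≤ 0 :=
    Finset.sum_nonpos fun i _ =>
      mul_nonpos_of_nonpos_of_nonneg (by linarith [hle i]) (sq_nonneg _)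
  have e : ∑ i, (a i - (n - 1) * u) * (a i + u) ^ 2 =
      ∑ i, a i ^ 3 + (2 * u - (n - 1) * u) * ∑ i, a i ^ 2
        + (u ^ 2 - 2 * (n - 1) * u ^ 2) * ∑ i, a i - n * ((n - 1) * u ^ 3) := by
    have hc : (n : ℝ) * ((n - 1) * u ^ 3) = ∑ _i : Fin n, ((n : ℝ) - 1) * u ^ 3 := by simp
    rw [hc, Finset.mul_sum, Finset.mul_sum, ← Finset.sum_add_distrib, ← Finset.sum_add_distrib,
      ← Finset.sum_sub_distrib]
    exact Finset.sum_congr rfl fun i _ => by ring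
  rw [e, hsum, hsq] at key
  have h5 : (n : ℝ) * ((n - 1) * u ^ 3) = u * A := by rw [← huA]; ring
  rw [h5] at key
  linarith

theorem sum_cubes_bound (n : ℕ) (hn : 2 ≤ n) (a : Fin n → ℝ) (A : ℝ)
    (hsum : ∑ i, a i = 0) (hsq : ∑ i, (a i) ^ 2 = A) :
    |∑ i, (a i) ^ 3| ≤ ((n : ℝ) - 2) / Real.sqrt (n * (n - 1)) * A ^ ((3 : ℝ) / 2) := by
  have hn' : (2 : ℝ) ≤ n := by exact_mod_cast hn
  have hA : 0 ≤ A := hsq ▸ Finset.sum_nonneg fun i _ => sq_nonneg _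
  have hp : (0 : ℝ) < n * (n - 1) := mul_pos (by linarith) (by linarith)
  have hA3 : A ^ ((3 : ℝ) / 2) = Real.sqrt A * A := by
    rw [show (3 : ℝ) / 2 = 1 / 2 + 1 by norm_num,
      Real.rpow_add_of_nonneg hA (by norm_num) (by norm_num), Real.rpow_one, Real.sqrt_eq_rpow]
  have hu : 0 ≤ Real.sqrt A / Real.sqrt (n * (n - 1)) := by positivity
  have huA : (Real.sqrt A / Real.sqrt (n * (n - 1))) ^ 2 * (n * (n - 1)) = A := by
    rw [div_pow, Real.sq_sqrt hA, Real.sq_sqrt hp.le, div_mul_cancel₀ _ hp.ne']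
  have h1 := sum_cubes_aux n hn a A _ hsum hsq hu huA
  have h2 := sum_cubes_aux n hn (fun i => - a i) A _ (by simp [hsum]) (by simpa using hsq) hu huA
  have h3 : ∑ i, (- a i) ^ 3 = - ∑ i, a i ^ 3 := by
    rw [← Finset.sum_neg_distrib]
    exact Finset.sum_congr rfl fun i _ => by ring
  rw [h3] at h2
  have e : ((n : ℝ) - 2) / Real.sqrt (n * (n - 1)) * A ^ ((3 : ℝ) / 2) =
      ((n : ℝ) - 2) * (Real.sqrt A / Real.sqrt (n * (n - 1))) * A := by
    rw [hA3]; ring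
  rw [e]
  exact abs_le.2 ⟨by linarith, h1⟩
end

section
/- Let n ≥ 2 be an integer and let a_1, …, a_n be real numbers satisfying ∑_{i=1}^n a_i = 0 and ∑_{i=1}^n a_i² = 𝒜. Then equality |∑_{i=1}^n a_i³| = ((n−2)/√(n(n−1))) · 𝒜^{3/2} holds if and only if at least n−1 of the numbers a_1, …, a_n are equal to each other. -/
theorem aux_fwd (n : ℕ) (hn : 2 ≤ n) (a : Fin n → ℝ) (s : ℝ) (hs : 0 ≤ s)
    (hsum : ∑ i, a i = 0) (hsq : ∑ i, (a i) ^ 2 = n * (n - 1) * s ^ 2)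
    (hcu : ∑ i, (a i) ^ 3 = (n - 2) * (n * (n - 1)) * s ^ 3) :
    ∃ c : ℝ, n - 1 ≤ (Finset.univ.filter (fun i => a i = c)).card := by
  have hn' : (2 : ℝ) ≤ n := by exact_mod_cast hn
  have hle : ∀ i, a i ≤ (n - 1) * s := by
    intro i
    have h1 : a i + ∑ j ∈ Finset.univ.erase i, a j = 0 := by
      rw [Finset.add_sum_erase _ _ (Finset.mem_univ i), hsum]
    have h2 : a i ^ 2 + ∑ j ∈ Finset.univ.erase i, a j ^ 2 = n * (n - 1) * s ^ 2 := by
      rw [Finset.add_sum_erase _ (fun j => a j ^ 2) (Finset.mem_univ i), hsq]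
    have h3 := sq_sum_le_card_mul_sum_sq (s := Finset.univ.erase i) (f := a)
    rw [Finset.card_erase_of_mem (Finset.mem_univ i), Finset.card_univ, Fintype.card_fin,
      Nat.cast_sub (by omega)] at h3
    push_cast at h3
    have e1 : ∑ j ∈ Finset.univ.erase i, a j = - a i := by linarith
    have e2 : ∑ j ∈ Finset.univ.erase i, a j ^ 2 = n * (n - 1) * s ^ 2 - a i ^ 2 := by linarith
    rw [e1, e2] at h3
    have h4 : (n : ℝ) * a i ^ 2 ≤ n * ((n - 1) * s) ^ 2 := by nlinarith
    have h5 : a i ^ 2 ≤ ((n - 1) * s) ^ 2 := le_of_mul_le_mul_left h4 (by linarith)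
    exact le_of_sq_le_sq h5 (mul_nonneg (by linarith) hs)
  have hz : ∑ i, ((n - 1) * s - a i) * (a i + s) ^ 2 = 0 := by
    have : ∀ i, ((n - 1) * s - a i) * (a i + s) ^ 2 =
        (n - 3) * s * a i ^ 2 + (2 * n - 3) * s ^ 2 * a i + (n - 1) * s ^ 3 - a i ^ 3 := by
      intro i; ring
    simp only [this, Finset.sum_sub_distrib, Finset.sum_add_distrib, ← Finset.mul_sum, hsum, hsq,
      hcu, Finset.sum_const, Finset.card_univ, Fintype.card_fin, nsmul_eq_mul]
    ring
  rw [Finset.sum_eq_zero_iff_of_nonneg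
    (fun i _ => mul_nonneg (sub_nonneg.2 (hle i)) (sq_nonneg _))] at hz
  have hd : ∀ i, a i = (n - 1) * s ∨ a i = -s := by
    intro i
    rcases mul_eq_zero.1 (hz i (Finset.mem_univ i)) with h | h
    · left; linarith
    · right; have := pow_eq_zero_iff (two_ne_zero) |>.1 h; linarith
  refine ⟨-s, ?_⟩
  have hc := Finset.card_filter_add_card_filter_not (s := (Finset.univ : Finset (Fin n)))
    (fun i => a i = -s)
  rw [Finset.card_univ, Fintype.card_fin] at hc
  rcases hs.eq_or_lt with h0 | h0
  · have : Finset.univ.filter (fun i => a i = -s) = Finset.univ := by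
      apply Finset.filter_true_of_mem
      intro i _
      rcases hd i with h | h
      · rw [h, ← h0]; simp
      · exact h
    rw [this]; simp
  · have h1 : ∑ i, (a i + s) = ∑ i, if ¬ (a i = -s) then n * s else 0 := by
      apply Finset.sum_congr rfl
      intro i _
      split_ifs with h
      · rw [h]; ring
      · rcases hd i with h' | h'
        · rw [h']; ring
        · exact absurd h' h
    rw [← Finset.sum_filter, Finset.sum_add_distrib, hsum] at h1
    simp only [Finset.sum_const, Finset.card_univ, Fintype.card_fin, nsmul_eq_mul, zero_add] at h1
    have h2 : (1 : ℝ) = (Finset.univ.filter (fun i => ¬ (a i = -s))).card :=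
      mul_right_cancel₀ (b := (n : ℝ) * s) (by positivity) (by linarith)
    have h3 : 1 = (Finset.univ.filter (fun i => ¬ (a i = -s))).card := by exact_mod_cast h2
    omega

theorem sum_cubes_eq_iff (n : ℕ) (hn : 2 ≤ n) (a : Fin n → ℝ) (A : ℝ)
    (hsum : ∑ i, a i = 0) (hsq : ∑ i, (a i) ^ 2 = A) :
    |∑ i, (a i) ^ 3| = ((n : ℝ) - 2) / Real.sqrt (n * (n - 1)) * A ^ ((3 : ℝ) / 2) ↔
      ∃ c : ℝ, n - 1 ≤ (Finset.univ.filter (fun i => a i = c)).card := by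
  have hn' : (2 : ℝ) ≤ n := by exact_mod_cast hn
  have hN : (0 : ℝ) < n * (n - 1) := mul_pos (by linarith) (by linarith)
  have key : ∀ s : ℝ, 0 ≤ s → A = n * (n - 1) * s ^ 2 →
      ((n : ℝ) - 2) / Real.sqrt (n * (n - 1)) * A ^ ((3 : ℝ) / 2) =
        (n - 2) * (n * (n - 1)) * s ^ 3 := by
    intro s hs hA
    have hr := Real.sqrt_pos.2 hN
    have hr2 := Real.sq_sqrt hN.le
    set r := Real.sqrt (n * (n - 1)) with hrdef
    have hA' : A = (r * s) ^ 2 := by rw [hA, mul_pow, hr2]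
    have : A ^ ((3 : ℝ) / 2) = (r * s) ^ 3 := by
      rw [hA', ← Real.rpow_natCast, ← Real.rpow_mul (by positivity), ← Real.rpow_natCast]
      norm_num
    rw [this, ← hr2]
    field_simp
  constructor
  · intro h
    have hA0 : 0 ≤ A := hsq ▸ Finset.sum_nonneg (fun i _ => sq_nonneg _)
    have hAs : A = n * (n - 1) * (Real.sqrt (A / (n * (n - 1)))) ^ 2 := by
      rw [Real.sq_sqrt (by positivity), mul_div_cancel₀ _ hN.ne']
    have hs := Real.sqrt_nonneg (A / (n * (n - 1)))
    set s := Real.sqrt (A / (n * (n - 1)))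
    rw [key s hs hAs] at h
    rcases abs_choice (∑ i, (a i) ^ 3) with h' | h'
    · exact aux_fwd n hn a s hs hsum (hsq.trans hAs) (h' ▸ h)
    · rw [h'] at h
      obtain ⟨c, hc⟩ := aux_fwd n hn (fun i => - a i) s hs (by simp [hsum])
        (by simpa using hsq.trans hAs) (by
          rw [← h, ← Finset.sum_neg_distrib]
          exact Finset.sum_congr rfl (fun i _ => by ring))
      refine ⟨-c, ?_⟩
      simpa only [neg_eq_iff_eq_neg] using hc
  · rintro ⟨c, hc⟩
    have hcc := Finset.card_filter_add_card_filter_not (s := (Finset.univ : Finset (Fin n)))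
      (fun i => a i = c)
    rw [Finset.card_univ, Fintype.card_fin] at hcc
    have : Nonempty (Fin n) := ⟨⟨0, by omega⟩⟩
    obtain ⟨j, hj⟩ := Finset.card_le_one_iff_subset_singleton.1
      (show (Finset.univ.filter (fun i => ¬ (a i = c))).card ≤ 1 by omega)
    have hj' : ∀ i, i ≠ j → a i = c := by
      intro i hi
      by_contra h
      exact hi (Finset.mem_singleton.1 (hj (by simp [h])))
    have hp : ∀ f : ℝ → ℝ, ∑ i, f (a i) = f (a j) + (n - 1) * f c := by
      intro f
      rw [← Finset.add_sum_erase _ (fun i => f (a i)) (Finset.mem_univ j),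
        Finset.sum_congr rfl (fun i hi => by rw [hj' i (Finset.ne_of_mem_erase hi)]),
        Finset.sum_const, Finset.card_erase_of_mem (Finset.mem_univ j), Finset.card_univ,
        Fintype.card_fin, nsmul_eq_mul, Nat.cast_sub (by omega)]
      simp
    have h1 := hp (fun x => x)
    have h2 := hp (fun x => x ^ 2)
    have h3 := hp (fun x => x ^ 3)
    have haj : a j = -((n - 1) * c) := by linarith
    rw [haj] at h2 h3
    rw [key |c| (abs_nonneg c) (by rw [← hsq, h2, sq_abs]; ring), h3]
    have : (-(((n : ℝ) - 1) * c)) ^ 3 + (n - 1) * c ^ 3 = -((n - 2) * (n * (n - 1)) * c ^ 3) := by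
      ring
    rw [this, abs_neg, abs_mul, abs_pow, abs_of_nonneg (mul_nonneg (by linarith) hN.le)]
end

section
/- For every real number t with 2 ≤ t ≤ (1+√17)/2, one has 17·(t − 2 − 0.16)·(6t − 5.04) ≤ 10.56·(4t − 2 − 3√(−2t² + 2t + 8)). -/
theorem h4_nonpos (t : ℝ) (ht1 : 2 ≤ t) (ht2 : t ≤ (1 + Real.sqrt 17) / 2) :
    17 * (t - 2 - 0.16) * (6 * t - 5.04) ≤
      10.56 * (4 * t - 2 - 3 * Real.sqrt (-2 * t ^ 2 + 2 * t + 8)) := by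
  have h17 : Real.sqrt 17 ≤ 4.1232 := Real.sqrt_le_iff.mpr (by norm_num)
  have hsq : Real.sqrt 17 ^ 2 = 17 := Real.sq_sqrt (by norm_num)
  have h0 := Real.sqrt_nonneg 17
  have hq : 0 ≤ -2 * t ^ 2 + 2 * t + 8 := by
    nlinarith [mul_nonneg (sub_nonneg.2 ht2) (by linarith : 0 ≤ t - (1 - Real.sqrt 17) / 2)]
  have hs := Real.sq_sqrt hq
  set s := Real.sqrt (-2 * t ^ 2 + 2 * t + 8)
  have ht3 : t ≤ 2.5616 := by linarith
  rcases le_total t 2.35 with h | h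
  · have : s ≤ (-2 * t ^ 2 + 2 * t + 8) * (5 / 16) + 4 / 5 := by
      rw [← hs]; nlinarith [sq_nonneg (s - 8 / 5)]
    nlinarith [mul_nonneg (sub_nonneg.2 ht1) (sub_nonneg.2 h)]
  · have : s ≤ (-2 * t ^ 2 + 2 * t + 8) * (5 / 8) + 2 / 5 := by
      rw [← hs]; nlinarith [sq_nonneg (s - 4 / 5)]
    nlinarith [mul_nonneg (sub_nonneg.2 ht3) (sub_nonneg.2 h)]
end

section
/- For every real number t with 2 ≤ t ≤ (1+√17)/2, one has 17·(t − 2 − 0.23)·(9t − 8.39) ≤ 11.68·(4t − 2 − 3√(−2t² + 2t + 8)). -/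
theorem h5_nonpos (t : ℝ) (ht1 : 2 ≤ t) (ht2 : t ≤ (1 + Real.sqrt 17) / 2) :
    17 * (t - 2 - 0.23) * (9 * t - 8.39) ≤
      11.68 * (4 * t - 2 - 3 * Real.sqrt (-2 * t ^ 2 + 2 * t + 8)) := by
  have h17 : Real.sqrt 17 < 4.1232 := by
    rw [Real.sqrt_lt' (by norm_num)]; norm_num
  have hq : 0 ≤ -2 * t ^ 2 + 2 * t + 8 := by
    have := Real.sq_sqrt (show (0:ℝ) ≤ 17 by norm_num)
    nlinarith [Real.sqrt_nonneg 17]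
  have ht3 : t ≤ 2.5616 := by linarith
  have hs := Real.sq_sqrt hq
  set s := Real.sqrt (-2 * t ^ 2 + 2 * t + 8)
  rcases le_total t 2.4 with h | h
  · have h1 := sq_nonneg (s - 1.3)
    have h2 := mul_nonneg (sub_nonneg.2 ht1) (sub_nonneg.2 h)
    nlinarith
  · have h1 := sq_nonneg (s - 0.6)
    have h2 := mul_nonneg (sub_nonneg.2 h) (sub_nonneg.2 ht3)
    nlinarith
end

section
/- Let n ≥ 1 be an integer and let a_{ij}, b_i (1 ≤ i, j ≤ n) be real numbers satisfying ∑_i b_i = 0, ∑_i b_i² = 𝓑 with 𝓑 > 0, and ∑_{i,j} (b_i + b_j) a_{ij} = 𝓒. Then ∑_i a_{ii}² + 3 ∑_{i ≠ j} a_{ij}² ≥ 3𝓒² / (2(n+4)𝓑). -/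
theorem lagrange_min (n : ℕ) (hn : 1 ≤ n) (a : Fin n → Fin n → ℝ) (b : Fin n → ℝ)
    (B C : ℝ) (hb : ∑ i, b i = 0) (hB : ∑ i, (b i) ^ 2 = B) (hBpos : 0 < B)
    (hC : ∑ i, ∑ j, (b i + b j) * a i j = C) :
    ∑ i, (a i i) ^ 2 + 3 * ∑ i, ∑ j ∈ Finset.univ.filter (fun j => j ≠ i), (a i j) ^ 2 ≥
      3 * C ^ 2 / (2 * (n + 4) * B) := by
  have hL : ∑ i, (a i i) ^ 2 + 3 * ∑ i, ∑ j ∈ Finset.univ.filter (fun j => j ≠ i), (a i j) ^ 2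
      = ∑ i, ∑ j, (3 * (a i j) ^ 2 - if j = i then 2 * (a i j) ^ 2 else 0) := by
    rw [Finset.mul_sum, ← Finset.sum_add_distrib]
    refine Finset.sum_congr rfl fun i _ => ?_
    rw [Finset.sum_sub_distrib, ← Finset.mul_sum, Finset.sum_ite_eq' Finset.univ i,
      Finset.filter_ne', ← Finset.add_sum_erase Finset.univ _ (Finset.mem_univ i)]
    simp only [Finset.mem_univ, if_true]
    ring
  have hD : ∑ i, ∑ j, ((b i + b j) ^ 2 / 3 + if j = i then 2 / 3 * (b i + b j) ^ 2 else 0)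
      = 2 * (n + 4) * B / 3 := by
    have h1 : ∀ i, ∑ j, ((b i + b j) ^ 2 / 3 + if j = i then 2 / 3 * (b i + b j) ^ 2 else 0)
        = (n / 3 + 8 / 3) * b i ^ 2 + B / 3 := by
      intro i
      rw [Finset.sum_add_distrib, Finset.sum_ite_eq' Finset.univ i, ← Finset.sum_div]
      have h2 : ∑ j, (b i + b j) ^ 2 = n * b i ^ 2 + B := by
        simp only [add_sq, Finset.sum_add_distrib, ← Finset.mul_sum, hb, hB]
        simp
      rw [h2]
      simp only [Finset.mem_univ, if_true]
      ring
    simp only [h1, Finset.sum_add_distrib, ← Finset.mul_sum, hB]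
    simp
    ring
  have key : ∀ t : ℝ, 2 * t * C - t ^ 2 * (2 * (n + 4) * B / 3) ≤
      ∑ i, ∑ j, (3 * (a i j) ^ 2 - if j = i then 2 * (a i j) ^ 2 else 0) := by
    intro t
    rw [← hC, ← hD]
    simp only [Finset.mul_sum]
    simp only [← Finset.sum_sub_distrib]
    refine Finset.sum_le_sum fun i _ => Finset.sum_le_sum fun j _ => ?_
    split_ifs
    · nlinarith [sq_nonneg (a i j - t * (b i + b j))]
    · nlinarith [sq_nonneg (3 * a i j - t * (b i + b j))]
  rw [hL]
  have hpos : 0 < 2 * ((n : ℝ) + 4) * B := by positivity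
  have h := key (3 * C / (2 * (n + 4) * B))
  refine ge_iff_le.mpr (le_trans (le_of_eq ?_) h)
  field_simp
  ring
end

section
/- Let n ≥ 1 be an integer, let λ_1, …, λ_n be real numbers, and let (h_{ijk})_{1 ≤ i,j,k ≤ n} be real numbers that are symmetric under all permutations of the indices i, j, k. Set S = ∑_i λ_i², A = ∑_{i,j,k} h_{ijk}² λ_i², and B = ∑_{i,j,k} h_{ijk}² λ_i λ_j. Then 3(A − 2B) ≤ σ S ∑_{i,j,k} h_{ijk}², where σ = (√17 + 1)/2. -/
lemma sigma_pair (s a c : ℝ) (hs : 2 ≤ s) (h4 : s * (s - 1) = 4) :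
    c ^ 2 - 4 * a * c ≤ s * (a ^ 2 + c ^ 2) := by
  have h1 : 0 ≤ s * (s * (a ^ 2 + c ^ 2) - (c ^ 2 - 4 * a * c)) := by
    have : s * (s * (a ^ 2 + c ^ 2) - (c ^ 2 - 4 * a * c)) = (s * a + 2 * c) ^ 2 := by
      linear_combination c ^ 2 * h4
    rw [this]; positivity
  have := nonneg_of_mul_nonneg_right h1 (by linarith)
  linarith

lemma sub_one_le {n : ℕ} (l : Fin n → ℝ) (T : Finset (Fin n)) :
    ∑ i ∈ T, (l i) ^ 2 ≤ ∑ i, (l i) ^ 2 :=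
  Finset.sum_le_sum_of_subset_of_nonneg (Finset.subset_univ T) (fun i _ _ => sq_nonneg (l i))

lemma pair_bound {n : ℕ} (l : Fin n → ℝ) (s : ℝ) (hs : 2 ≤ s) (h4 : s * (s - 1) = 4)
    (i k : Fin n) (hik : i ≠ k) :
    (l k) ^ 2 - 4 * l i * l k ≤ s * ∑ i, (l i) ^ 2 := by
  have h1 := sub_one_le l {i, k}
  rw [Finset.sum_pair hik] at h1
  exact (sigma_pair s _ _ hs h4).trans (mul_le_mul_of_nonneg_left h1 (by linarith))

lemma point_bound {n : ℕ} (l : Fin n → ℝ) (s : ℝ) (hs : 2 ≤ s) (h4 : s * (s - 1) = 4)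
    (i j k : Fin n) :
    (l i) ^ 2 + (l j) ^ 2 + (l k) ^ 2 - 2 * (l i * l j + l j * l k + l i * l k)
      ≤ s * ∑ i, (l i) ^ 2 := by
  have h0 : 0 ≤ s * ∑ i, (l i) ^ 2 :=
    mul_nonneg (by linarith) (Finset.sum_nonneg fun i _ => sq_nonneg _)
  by_cases hij : i = j
  · subst hij
    by_cases hik : i = k
    · subst hik
      nlinarith [sq_nonneg (l i)]
    · have := pair_bound l s hs h4 i k hik
      linarith
  · by_cases hik : i = k
    · subst hik
      have := pair_bound l s hs h4 i j hij
      linarith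
    · by_cases hjk : j = k
      · subst hjk
        have := pair_bound l s hs h4 j i (Ne.symm hij)
        linarith
      · have h1 := sub_one_le l {i, j, k}
        rw [Finset.sum_insert (by simp [hij, hik]), Finset.sum_pair hjk] at h1
        have h2 : 2 * ∑ i, (l i) ^ 2 ≤ s * ∑ i, (l i) ^ 2 :=
          mul_le_mul_of_nonneg_right hs (Finset.sum_nonneg fun i _ => sq_nonneg _)
        nlinarith [sq_nonneg (l i + l j + l k)]

theorem A_sub_2B_bound (n : ℕ) (hn : 1 ≤ n) (l : Fin n → ℝ) (h : Fin n → Fin n → Fin n → ℝ)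
    (hsymm : ∀ i j k, h i j k = h j i k ∧ h i j k = h i k j)
    (S A B : ℝ) (hS : S = ∑ i, (l i) ^ 2)
    (hA : A = ∑ i, ∑ j, ∑ k, (h i j k) ^ 2 * (l i) ^ 2)
    (hB : B = ∑ i, ∑ j, ∑ k, (h i j k) ^ 2 * l i * l j) :
    3 * (A - 2 * B) ≤ (Real.sqrt 17 + 1) / 2 * S * ∑ i, ∑ j, ∑ k, (h i j k) ^ 2 := by
  have hq : Real.sqrt 17 ^ 2 = 17 := Real.sq_sqrt (by norm_num)
  have hq3 : 3 ≤ Real.sqrt 17 := Real.le_sqrt_of_sq_le (by norm_num)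
  have sw1 : ∀ f : Fin n → Fin n → Fin n → ℝ,
      ∑ i, ∑ j, ∑ k, (h i j k) ^ 2 * f i j k = ∑ i, ∑ j, ∑ k, (h i j k) ^ 2 * f j i k := by
    intro f
    rw [Finset.sum_comm]
    refine Finset.sum_congr rfl fun i _ => Finset.sum_congr rfl fun j _ =>
      Finset.sum_congr rfl fun k _ => ?_
    rw [(hsymm i j k).1]
  have sw2 : ∀ f : Fin n → Fin n → Fin n → ℝ,
      ∑ i, ∑ j, ∑ k, (h i j k) ^ 2 * f i j k = ∑ i, ∑ j, ∑ k, (h i j k) ^ 2 * f i k j := by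
    intro f
    refine Finset.sum_congr rfl fun i _ => ?_
    rw [Finset.sum_comm]
    refine Finset.sum_congr rfl fun j _ => Finset.sum_congr rfl fun k _ => ?_
    rw [(hsymm i j k).2]
  have hA2 := hA.trans (sw1 fun i _ _ => (l i) ^ 2)
  have hA3 := hA2.trans (sw2 fun _ j _ => (l j) ^ 2)
  have hB1 : B = ∑ i, ∑ j, ∑ k, (h i j k) ^ 2 * (l i * l j) := by
    simp only [hB, mul_assoc]
  have hB2 := hB1.trans (sw2 fun i j _ => l i * l j)
  have hB3 := hB2.trans (sw1 fun i _ k => l i * l k)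
  have key : 3 * (A - 2 * B) = ∑ i, ∑ j, ∑ k, (h i j k) ^ 2 *
      ((l i) ^ 2 + (l j) ^ 2 + (l k) ^ 2 - 2 * (l i * l j + l j * l k + l i * l k)) := by
    have e : 3 * (A - 2 * B) = A + A + A - 2 * (B + B + B) := by ring
    rw [e]
    conv_lhs =>
      congr
      · congr
        · congr
          · rw [hA]
          · rw [hA2]
        · rw [hA3]
      · congr
        · skip
        · congr
          · congr
            · rw [hB1]
            · rw [hB3]
          · rw [hB2]
    simp only [mul_add, mul_sub, Finset.sum_add_distrib, Finset.sum_sub_distrib,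
      Finset.mul_sum, mul_left_comm]
  rw [key, Finset.mul_sum]
  refine Finset.sum_le_sum fun i _ => ?_
  rw [Finset.mul_sum]
  refine Finset.sum_le_sum fun j _ => ?_
  rw [Finset.mul_sum]
  refine Finset.sum_le_sum fun k _ => ?_
  rw [mul_comm, hS]
  exact mul_le_mul_of_nonneg_right
    (point_bound l _ (by linarith) (by nlinarith) i j k) (sq_nonneg _)
end

section
/- Let n ≥ 1 be an integer and let (h_{ijkl})_{1 ≤ i,j,k,l ≤ n} be real numbers that are symmetric under all permutations of the first three indices i, j, k (i.e. h_{ijkl} = h_{jikl} = h_{ikjl} for all indices). Define u_{ijkl} = (h_{ijkl} + h_{lijk} + h_{klij} + h_{jkli})/4. Then ∑_{i,j,k,l} (h_{ijkl}² − u_{ijkl}²) ≥ (3/4) ∑_{i,j} (h_{ijij} − h_{jiji})², where the first sum ranges over all ordered quadruples (i,j,k,l) and the second over all ordered pairs (i,j). -/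
theorem symmetrization_ineq (n : ℕ) (hn : 1 ≤ n)
    (h : Fin n → Fin n → Fin n → Fin n → ℝ)
    (hsymm : ∀ i j k l, h i j k l = h j i k l ∧ h i j k l = h i k j l)
    (u : Fin n → Fin n → Fin n → Fin n → ℝ)
    (hu : ∀ i j k l, u i j k l = (h i j k l + h l i j k + h k l i j + h j k l i) / 4) :
    ∑ i, ∑ j, ∑ k, ∑ l, ((h i j k l) ^ 2 - (u i j k l) ^ 2) ≥
      3 / 4 * ∑ i, ∑ j, (h i j i j - h j i j i) ^ 2 := by
  have s1 : ∀ i j k l, h i j k l = h j i k l := fun i j k l => (hsymm i j k l).1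
  have s2 : ∀ i j k l, h i j k l = h i k j l := fun i j k l => (hsymm i j k l).2
  -- variance over the cyclic shifts
  obtain ⟨D, hD⟩ : ∃ D : Fin n → Fin n → Fin n → Fin n → ℝ, ∀ i j k l, D i j k l =
      ((h i j k l) ^ 2 + (h l i j k) ^ 2 + (h k l i j) ^ 2 + (h j k l i) ^ 2) / 4
        - (u i j k l) ^ 2 := ⟨_, fun _ _ _ _ => rfl⟩
  have hD0 : ∀ i j k l, 0 ≤ D i j k l := by
    intro i j k l
    rw [hD, hu]
    nlinarith [sq_nonneg (h i j k l - h l i j k), sq_nonneg (h i j k l - h k l i j),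
      sq_nonneg (h i j k l - h j k l i), sq_nonneg (h l i j k - h k l i j),
      sq_nonneg (h l i j k - h j k l i), sq_nonneg (h k l i j - h j k l i)]
  have cyc : ∀ f : Fin n → Fin n → Fin n → Fin n → ℝ,
      ∑ i, ∑ j, ∑ k, ∑ l, f l i j k = ∑ i, ∑ j, ∑ k, ∑ l, f i j k l := by
    intro f
    calc ∑ i, ∑ j, ∑ k, ∑ l, f l i j k
        = ∑ i, ∑ j, ∑ l, ∑ k, f l i j k :=
          Finset.sum_congr rfl fun i _ => Finset.sum_congr rfl fun j _ => Finset.sum_comm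
      _ = ∑ i, ∑ l, ∑ j, ∑ k, f l i j k :=
          Finset.sum_congr rfl fun i _ => Finset.sum_comm
      _ = ∑ l, ∑ i, ∑ j, ∑ k, f l i j k := Finset.sum_comm
  have c1 := cyc (fun i j k l => (h i j k l) ^ 2)
  have c2 := cyc (fun i j k l => (h l i j k) ^ 2)
  have c3 := cyc (fun i j k l => (h k l i j) ^ 2)
  have hsum : ∑ i, ∑ j, ∑ k, ∑ l, ((h i j k l) ^ 2 - (u i j k l) ^ 2)
      = ∑ i, ∑ j, ∑ k, ∑ l, D i j k l := by
    simp only [hD, Finset.sum_sub_distrib, ← Finset.sum_div, Finset.sum_add_distrib]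
    linarith
  have p1 : ∀ i j, D i j i j = (h i j i j - h j i j i) ^ 2 / 4 := by
    intro i j
    rw [hD, hu]; ring
  have p2 : ∀ i j, D i i j j = (h i j i j - h j i j i) ^ 2 / 4 := by
    intro i j
    have e1 : h i j j i = h j i j i := s1 _ _ _ _
    have e2 : h i i j j = h i j i j := s2 _ _ _ _
    have e3 : h j i i j = h i j i j := s1 _ _ _ _
    have e4 : h j j i i = h j i j i := s2 _ _ _ _
    rw [hD, hu, e1, e2, e3, e4]; ring
  have p3 : ∀ i j, D i j j i = (h i j i j - h j i j i) ^ 2 / 4 := by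
    intro i j
    have e1 : h i j j i = h j i j i := s1 _ _ _ _
    have e2 : h i i j j = h i j i j := s2 _ _ _ _
    have e3 : h j i i j = h i j i j := s1 _ _ _ _
    have e4 : h j j i i = h j i j i := s2 _ _ _ _
    rw [hD, hu, e1, e2, e3, e4]; ring
  have hpt : ∀ i j k l, (if k = i then if l = j then D i j i j else 0 else 0)
      + (if j = i then if l = k then D i i k k else 0 else 0)
      + (if k = j then if l = i then D i j j i else 0 else 0) ≤ D i j k l := by
    intro i j k l
    have h0 := hD0 i j k l
    have hd : ∀ i, D i i i i = 0 := by intro i; rw [p1]; ring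
    clear hsum c1 c2 c3 cyc p1 p2 p3 hD hu s1 s2 hsymm hD0
    split_ifs <;> grind
  rw [hsum, ge_iff_le]
  refine le_trans (le_of_eq ?_) (Finset.sum_le_sum fun i _ => Finset.sum_le_sum fun j _ =>
    Finset.sum_le_sum fun k _ => Finset.sum_le_sum fun l _ => hpt i j k l)
  have q1 : ∑ i, ∑ j, ∑ k, ∑ l, (if k = i then if l = j then D i j i j else 0 else 0)
      = ∑ i, ∑ j, (h i j i j - h j i j i) ^ 2 / 4 := by
    refine Finset.sum_congr rfl fun i _ => Finset.sum_congr rfl fun j _ => ?_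
    rw [Finset.sum_eq_single i (by intro b _ hb; simp [hb]) (by simp)]
    simp [p1]
  have q2 : ∑ i, ∑ j, ∑ k, ∑ l, (if j = i then if l = k then D i i k k else 0 else 0)
      = ∑ i, ∑ j, (h i j i j - h j i j i) ^ 2 / 4 := by
    refine Finset.sum_congr rfl fun i _ => ?_
    rw [Finset.sum_eq_single i (by intro b _ hb; simp [hb]) (by simp)]
    simp [p2]
  have q3 : ∑ i, ∑ j, ∑ k, ∑ l, (if k = j then if l = i then D i j j i else 0 else 0)
      = ∑ i, ∑ j, (h i j i j - h j i j i) ^ 2 / 4 := by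
    refine Finset.sum_congr rfl fun i _ => Finset.sum_congr rfl fun j _ => ?_
    rw [Finset.sum_eq_single j (by intro b _ hb; simp [hb]) (by simp)]
    simp [p3]
  simp only [Finset.sum_add_distrib]
  rw [q1, q2, q3]
  simp only [← Finset.sum_div]
  ring
end

section
/- Let p be a real number with 0 < p ≤ 1/52. Then for every real t with 0 < t < 4, (t − 12p)(4 − t)³/(1 + t)² ≤ (6 − 2√6 − 8p)(6 − √6 − 13p)²/(√6 − 1 + 13p). -/
theorem xi_aux (p q K t : ℝ) (hp1 : 0 < p) (hq0 : 0 < q) (hq1 : q ≤ 72 / 100)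
    (hp : p = (q ^ 2 + 4 * q - 2) / (6 * (11 + q)))
    (hK : K = (4 - q) ^ 4 / ((1 + q) * (11 + q))) :
    (t - 12 * p) * (4 - t) ^ 3 ≤ K * (1 + t) ^ 2 := by
  have hK4 : 4 ≤ K := by
    rw [hK, le_div_iff₀ (by positivity)]
    have h1 : (328 / 100 : ℝ) ^ 4 ≤ (4 - q) ^ 4 := by
      apply pow_le_pow_left₀ (by norm_num); linarith
    nlinarith
  have key : K * (1 + t) ^ 2 - (t - 12 * p) * (4 - t) ^ 3 =
      (t - q) ^ 2 * ((t + (q - 6 - 6 * p)) ^ 2 +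
        (48 + 144 * p + K + 2 * q * (2 * q - 12 - 12 * p) - q ^ 2 - (q - 6 - 6 * p) ^ 2)) := by
    rw [hK, hp]
    have : (11 + q) ≠ 0 := by positivity
    have : (1 + q) ≠ 0 := by positivity
    field_simp
    ring
  have hp2 : p ≤ 1 / 10 := by
    rw [hp, div_le_iff₀ (by positivity)]
    nlinarith
  have h2 : 0 ≤ 48 + 144 * p + K + 2 * q * (2 * q - 12 - 12 * p) - q ^ 2
      - (q - 6 - 6 * p) ^ 2 := by
    nlinarith [mul_pos hp1 hq0, sq_nonneg (q - 72 / 100), mul_nonneg hp1.le (sub_nonneg.2 hq1),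
      mul_nonneg hp1.le (sub_nonneg.2 hp2)]
  have : 0 ≤ K * (1 + t) ^ 2 - (t - 12 * p) * (4 - t) ^ 3 := by
    rw [key]; positivity
  linarith

theorem xi_bound (p : ℝ) (hp1 : 0 < p) (hp2 : p ≤ 1 / 52) (t : ℝ) (ht1 : 0 < t) (ht2 : t < 4) :
    (t - 12 * p) * (4 - t) ^ 3 / (1 + t) ^ 2 ≤
      (6 - 2 * Real.sqrt 6 - 8 * p) * (6 - Real.sqrt 6 - 13 * p) ^ 2 /
        (Real.sqrt 6 - 1 + 13 * p) := by
  have hs2 : Real.sqrt 6 ^ 2 = 6 := Real.sq_sqrt (by norm_num)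
  have hs1 : 2.449 < Real.sqrt 6 := Real.lt_sqrt_of_sq_lt (by norm_num)
  have hs3 : Real.sqrt 6 < 2.45 := by
    rw [Real.sqrt_lt' (by norm_num)]; norm_num
  generalize Real.sqrt 6 = s at *
  obtain ⟨r, hr⟩ : ∃ r, r = Real.sqrt (6 + 54 * p + 9 * p ^ 2) := ⟨_, rfl⟩
  have hr2 : r ^ 2 = 6 + 54 * p + 9 * p ^ 2 := by
    rw [hr]; exact Real.sq_sqrt (by positivity)
  have hr1 : s + 10 * p ≤ r := by
    rw [hr]; apply Real.le_sqrt_of_sq_le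
    nlinarith
  have hr3 : r ≤ 272 / 100 - 3 * p := by
    rw [hr, Real.sqrt_le_left (by linarith)]
    nlinarith
  obtain ⟨q, hq⟩ : ∃ q, q = -2 + 3 * p + r := ⟨_, rfl⟩
  have hqu : s - 2 + 13 * p ≤ q := by linarith
  have hq0 : 0 < q := by norm_num at hs1; linarith
  have hq1 : q ≤ 72 / 100 := by linarith
  have hpq : p = (q ^ 2 + 4 * q - 2) / (6 * (11 + q)) := by
    rw [eq_div_iff (by positivity), hq]
    nlinarith
  have h := xi_aux p q _ t hp1 hq0 hq1 hpq rfl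
  rw [div_le_iff₀ (by positivity)]
  refine h.trans (mul_le_mul_of_nonneg_right ?_ (by positivity))
  norm_num at hs1 hs3
  obtain ⟨u, hu⟩ : ∃ u, u = s - 2 + 13 * p := ⟨_, rfl⟩
  have hu0 : 0 < u := by linarith
  have huq : u ≤ q := by linarith
  have e1 : 6 - s - 13 * p = 4 - u := by linarith
  have e2 : s - 1 + 13 * p = 1 + u := by linarith
  have h3 : (4 - u) ^ 2 ≤ (6 - 2 * s - 8 * p) * (11 + u) := by
    rw [hu]
    nlinarith [mul_nonneg hp1.le (by linarith : 0 ≤ 162 - 60 * s - 273 * p)]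
  rw [e1, e2]
  calc (4 - q) ^ 4 / ((1 + q) * (11 + q)) ≤ (4 - u) ^ 4 / ((1 + u) * (11 + u)) := by
        have : 0 ≤ 4 - q := by linarith
        gcongr
    _ ≤ _ := by
        rw [div_le_div_iff₀ (by positivity) (by positivity)]
        have h4 : 0 ≤ (4 - u) ^ 2 * (1 + u) := by positivity
        nlinarith [mul_le_mul_of_nonneg_left h3 h4]
end

section
/- Let n ≥ 2 be an integer, let H ≥ 0 be a real number, and let λ be a real number satisfying λ² + (nH − λ)²/(n−1) ≤ 16n/15. Then (15/(16(n−1))) λ² ≤ 1 + (√(15n)/(2(n−1))) H. -/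
theorem ineq_313 (n : ℕ) (hn : 2 ≤ n) (H : ℝ) (hH : 0 ≤ H) (l : ℝ)
    (hl : l ^ 2 + (n * H - l) ^ 2 / ((n : ℝ) - 1) ≤ 16 * n / 15) :
    15 / (16 * ((n : ℝ) - 1)) * l ^ 2 ≤ 1 + Real.sqrt (15 * n) / (2 * ((n : ℝ) - 1)) * H := by
  have hn' : (2 : ℝ) ≤ n := by exact_mod_cast hn
  have hm : (0 : ℝ) < (n : ℝ) - 1 := by linarith
  have hn0 : (0 : ℝ) < n := by linarith
  have hs0 := Real.sqrt_nonneg (15 * (n : ℝ))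
  have hs2 : Real.sqrt (15 * (n : ℝ)) ^ 2 = 15 * n := Real.sq_sqrt (by positivity)
  set s := Real.sqrt (15 * (n : ℝ)) with hs
  have hq : 0 ≤ (n * H - l) ^ 2 / ((n : ℝ) - 1) := by positivity
  have hls : l ≤ 4 * s / 15 := by
    refine (le_abs_self l).trans (abs_le_of_sq_le_sq ?_ (by positivity))
    nlinarith
  have h1 : l ^ 2 + n * H ^ 2 - 2 * H * l ≤ 16 * ((n : ℝ) - 1) / 15 := by
    have h2 := mul_le_mul_of_nonneg_right hl hm.le
    rw [add_mul, div_mul_cancel₀ _ hm.ne'] at h2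
    refine le_of_mul_le_mul_left ?_ hn0
    linarith
  have h3 : l ^ 2 ≤ 16 * ((n : ℝ) - 1) / 15 + 8 / 15 * s * H := by
    have h4 := mul_le_mul_of_nonneg_left hls hH
    have h5 : 0 ≤ n * H ^ 2 := by positivity
    linarith
  have e : 1 + s / (2 * ((n : ℝ) - 1)) * H
      = 15 / (16 * ((n : ℝ) - 1)) * (16 * ((n : ℝ) - 1) / 15 + 8 / 15 * s * H) := by
    field_simp
    ring
  rw [e]
  exact mul_le_mul_of_nonneg_left h3 (by positivity)
end

section
/- Let n ≥ 2 be an integer, let H ≥ 0 be a real number, and let μ_1, …, μ_n be real numbers with ∑_i μ_i = 0. Set Φ = ∑_i μ_i² and β(n,H) = n + n³H²/(2(n−1)) + (n(n−2)/(2(n−1)))√(n²H⁴ + 4(n−1)H²). If Φ ≥ β(n,H) − nH², then Φ² − nΦ − nH²Φ − nH ∑_i μ_i³ ≥ 0. -/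
theorem coord_bound (n : ℕ) (hn : 2 ≤ n) (μ : Fin n → ℝ) (hμ : ∑ i, μ i = 0) (i : Fin n) :
    (n : ℝ) * (μ i) ^ 2 ≤ (n - 1) * ∑ j, (μ j) ^ 2 := by
  have h := sq_sum_le_card_mul_sum_sq (s := Finset.univ.erase i) (f := μ)
  have h1 := Finset.add_sum_erase Finset.univ μ (Finset.mem_univ i)
  have h2 := Finset.add_sum_erase Finset.univ (fun j => (μ j) ^ 2) (Finset.mem_univ i)
  rw [Finset.card_erase_of_mem (Finset.mem_univ i), Finset.card_univ, Fintype.card_fin,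
    Nat.cast_sub (by omega)] at h
  have h3 : ∑ j ∈ Finset.univ.erase i, μ j = - μ i := by linarith
  rw [h3] at h
  rw [← h2]
  push_cast at h
  nlinarith

theorem cubic_bound (n : ℕ) (hn : 2 ≤ n) (μ : Fin n → ℝ) (hμ : ∑ i, μ i = 0) (t : ℝ)
    (ht : 0 ≤ t) (hΦ : ∑ i, (μ i) ^ 2 = n * (n - 1) * t ^ 2) :
    ∑ i, (μ i) ^ 3 ≤ (n - 2) * t * ∑ i, (μ i) ^ 2 := by
  have hn' : (2 : ℝ) ≤ n := by exact_mod_cast hn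
  have hb : ∀ i, μ i ≤ (n - 1) * t := by
    intro i
    have h := coord_bound n hn μ hμ i
    rw [hΦ] at h
    refine le_of_abs_le (abs_le_of_sq_le_sq ?_ (mul_nonneg (by linarith) ht))
    have : (n : ℝ) * (μ i) ^ 2 ≤ n * ((n - 1) * t) ^ 2 := by nlinarith
    exact le_of_mul_le_mul_left this (by linarith)
  have hs : ∑ i, (μ i - (n - 1) * t) * (μ i + t) ^ 2 ≤ 0 :=
    Finset.sum_nonpos fun i _ =>
      mul_nonpos_of_nonpos_of_nonneg (by linarith [hb i]) (sq_nonneg _)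
  have he : ∑ i, (μ i - (n - 1) * t) * (μ i + t) ^ 2 = ∑ i, (μ i) ^ 3
      + (2 * t - (n - 1) * t) * ∑ i, (μ i) ^ 2
      + (t ^ 2 - 2 * (n - 1) * t ^ 2) * ∑ i, μ i - n * ((n - 1) * t ^ 3) := by
    have hc : (n : ℝ) * ((n - 1) * t ^ 3) = ∑ _i : Fin n, (((n : ℝ) - 1) * t ^ 3) := by simp
    rw [hc, Finset.mul_sum, Finset.mul_sum, ← Finset.sum_add_distrib, ← Finset.sum_add_distrib,
      ← Finset.sum_sub_distrib]
    exact Finset.sum_congr rfl fun i _ => by ring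
  rw [he, hμ, hΦ] at hs
  rw [hΦ]
  nlinarith

theorem F_nonneg (n : ℕ) (hn : 2 ≤ n) (H : ℝ) (hH : 0 ≤ H) (μ : Fin n → ℝ)
    (hμ : ∑ i, μ i = 0) (Φ : ℝ) (hΦ : Φ = ∑ i, (μ i) ^ 2)
    (hpinch : Φ ≥ (n : ℝ) + (n : ℝ) ^ 3 * H ^ 2 / (2 * (n - 1)) +
      (n : ℝ) * (n - 2) / (2 * (n - 1)) *
        Real.sqrt ((n : ℝ) ^ 2 * H ^ 4 + 4 * (n - 1) * H ^ 2) - n * H ^ 2) :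
    Φ ^ 2 - n * Φ - n * H ^ 2 * Φ - n * H * ∑ i, (μ i) ^ 3 ≥ 0 := by
  have hn' : (2 : ℝ) ≤ n := by exact_mod_cast hn
  have hΦ0 : 0 ≤ Φ := hΦ ▸ Finset.sum_nonneg fun i _ => sq_nonneg _
  have hm : (0 : ℝ) < n - 1 := by linarith
  have hnm : (0 : ℝ) < n * (n - 1) := by nlinarith
  obtain ⟨t, ht, hPt⟩ : ∃ t : ℝ, 0 ≤ t ∧ Φ = n * (n - 1) * t ^ 2 := by
    refine ⟨√(Φ / (n * (n - 1))), Real.sqrt_nonneg _, ?_⟩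
    rw [Real.sq_sqrt (div_nonneg hΦ0 hnm.le), mul_div_cancel₀ _ hnm.ne']
  have hc := cubic_bound n hn μ hμ t ht (hΦ ▸ hPt)
  rw [← hΦ] at hc
  generalize ∑ i, (μ i) ^ 3 = S at hc
  clear hΦ hμ
  obtain ⟨r, hr, hr2, hsr⟩ : ∃ r : ℝ, 0 ≤ r ∧ r ^ 2 = (n : ℝ) ^ 2 * H ^ 2 + 4 * (n - 1) ∧
      √((n : ℝ) ^ 2 * H ^ 4 + 4 * (n - 1) * H ^ 2) = H * r := by
    have h0 : 0 ≤ (n : ℝ) ^ 2 * H ^ 2 + 4 * (n - 1) := by positivity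
    refine ⟨√((n : ℝ) ^ 2 * H ^ 2 + 4 * (n - 1)), Real.sqrt_nonneg _, Real.sq_sqrt h0, ?_⟩
    rw [show (n : ℝ) ^ 2 * H ^ 4 + 4 * (n - 1) * H ^ 2
      = H ^ 2 * ((n : ℝ) ^ 2 * H ^ 2 + 4 * (n - 1)) by ring, Real.sqrt_mul (sq_nonneg H),
      Real.sqrt_sq hH]
  rw [hsr] at hpinch
  generalize (n : ℝ) = x at *
  have hkey : (x - 2) * H + r ≤ 2 * (x - 1) * t := by
    refine le_of_abs_le (abs_le_of_sq_le_sq ?_ (by positivity))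
    have e : x + x ^ 3 * H ^ 2 / (2 * (x - 1)) + x * (x - 2) / (2 * (x - 1)) * (H * r) - x * H ^ 2
        = x * (((x - 2) * H + r) ^ 2) / (4 * (x - 1)) := by
      have : ((x - 2) * H + r) ^ 2 = (x - 2) ^ 2 * H ^ 2 + 2 * (x - 2) * H * r
          + (x ^ 2 * H ^ 2 + 4 * (x - 1)) := by rw [← hr2]; ring
      rw [this]
      field_simp
      ring
    rw [e, hPt, ge_iff_le, div_le_iff₀ (by linarith)] at hpinch
    have : x * ((x - 2) * H + r) ^ 2 ≤ x * (2 * (x - 1) * t) ^ 2 := by nlinarith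
    exact le_of_mul_le_mul_left this (by linarith)
  have hq : 0 ≤ (x - 1) * t ^ 2 - 1 - H ^ 2 - (x - 2) * H * t := by
    have h1 : 0 ≤ (2 * (x - 1) * t - (x - 2) * H - r) * (2 * (x - 1) * t - (x - 2) * H + r) :=
      mul_nonneg (by linarith) (by linarith)
    have h2 : 0 ≤ (4 * (x - 1)) * ((x - 1) * t ^ 2 - 1 - H ^ 2 - (x - 2) * H * t) := by
      nlinarith
    exact nonneg_of_mul_nonneg_right h2 (by linarith)
  have hxH : 0 ≤ x * H := by positivity
  have h3 := mul_le_mul_of_nonneg_left hc hxH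
  have h4 : 0 ≤ Φ * (x * ((x - 1) * t ^ 2 - 1 - H ^ 2 - (x - 2) * H * t)) := by positivity
  have h5 : Φ ^ 2 = Φ * (x * (x - 1) * t ^ 2) := by rw [← hPt]; ring
  rw [h5]
  linarith
end

section
/- Let n ≥ 75 be an integer and set σ = (√17 + 1)/2. Then −0.43n + 0.571 + 1.1186·√((n/46)·(σn + n + 5n/23)) + (2.355 − 3/(2(n+4)))·(n/23) < 0. -/
theorem numeric_high_dim (n : ℕ) (hn : 75 ≤ n) :
    -0.43 * (n : ℝ) + 0.571 +
      1.1186 * Real.sqrt ((n : ℝ) / 46 * ((Real.sqrt 17 + 1) / 2 * n + n + 5 * n / 23)) +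
      (2.355 - 3 / (2 * ((n : ℝ) + 4))) * ((n : ℝ) / 23) < 0 := by
  have hx : (75 : ℝ) ≤ n := by exact_mod_cast hn
  generalize (n : ℝ) = x at hx
  have h17 : Real.sqrt 17 ≤ 4.1232 := by
    rw [Real.sqrt_le_left (by norm_num)]
    norm_num
  have h1 : Real.sqrt (x / 46 * ((Real.sqrt 17 + 1) / 2 * x + x + 5 * x / 23))
      ≤ 0.2867 * x := by
    rw [Real.sqrt_le_left (by linarith)]
    have h := mul_le_mul_of_nonneg_right h17 (sq_nonneg x)
    nlinarith [sq_nonneg x]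
  have h2 : 3 / 46 * (75 / 79) ≤ 3 / (2 * (x + 4)) * (x / 23) := by
    rw [div_mul_div_comm, div_mul_div_comm, div_le_div_iff₀ (by norm_num) (by linarith)]
    linarith
  have h3 : (2.355 - 3 / (2 * (x + 4))) * (x / 23)
      = 2.355 * (x / 23) - 3 / (2 * (x + 4)) * (x / 23) := by ring
  rw [h3]
  norm_num at *
  linarith
end

section
/- Let n ∈ {4, 5}, set η = 0.16 if n = 4 and η = 0.23 if n = 5, and let t be a real number with 2 ≤ t ≤ (1+√17)/2. Set r = (16t − 8 − 12√(−2t² + 2t + 8))/17. Then for every real number z, (t − 2 − η) + ((t − r − 2 − η)/(n−2))·(1 + z)² − (t − 2 + (2+η)/3)·z² ≤ 0. -/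
theorem quad_aux (a b c z : ℝ) (hB : 0 < c - b) (hD : a * c + b * (c - a) ≤ 0) :
    a + b * (1 + z) ^ 2 - c * z ^ 2 ≤ 0 := by
  by_contra h
  push Not at h
  nlinarith [mul_pos hB h, sq_nonneg ((c - b) * z - b)]

theorem K_nonpos (n : ℕ) (hn : n = 4 ∨ n = 5) (η : ℝ)
    (hη : η = if n = 4 then 0.16 else 0.23)
    (t : ℝ) (ht1 : 2 ≤ t) (ht2 : t ≤ (1 + Real.sqrt 17) / 2)
    (r : ℝ) (hr : r = (16 * t - 8 - 12 * Real.sqrt (-2 * t ^ 2 + 2 * t + 8)) / 17)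
    (z : ℝ) :
    (t - 2 - η) + (t - r - 2 - η) / ((n : ℝ) - 2) * (1 + z) ^ 2 -
      (t - 2 + (2 + η) / 3) * z ^ 2 ≤ 0 := by
  have h17 : Real.sqrt 17 ^ 2 = 17 := Real.sq_sqrt (by norm_num)
  have h17' := Real.sqrt_nonneg 17
  have hq : 0 ≤ -2 * t ^ 2 + 2 * t + 8 := by nlinarith
  have hs := Real.sq_sqrt hq
  have hs0 := Real.sqrt_nonneg (-2 * t ^ 2 + 2 * t + 8)
  set s := Real.sqrt (-2 * t ^ 2 + 2 * t + 8)
  have hs2 : s ≤ 2 := by nlinarith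
  have ht3 : t ≤ 2.562 := by nlinarith
  rcases hn with rfl | rfl
  · norm_num at hη
    subst hη hr
    apply quad_aux
    · push_cast
      linarith
    · push_cast
      rcases le_total t 2.35 with h | h
      · nlinarith [sq_nonneg (s - 1.5), mul_nonneg (sub_nonneg.2 ht1) (sub_nonneg.2 h)]
      · nlinarith [sq_nonneg (s - 0.75), mul_nonneg (sub_nonneg.2 ht3) (sub_nonneg.2 h)]
  · norm_num at hη
    subst hη hr
    apply quad_aux
    · push_cast
      linarith
    · push_cast
      rcases le_total t 2.35 with h | h
      · nlinarith [sq_nonneg (s - 1.5), mul_nonneg (sub_nonneg.2 ht1) (sub_nonneg.2 h)]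
      · nlinarith [sq_nonneg (s - 0.6), mul_nonneg (sub_nonneg.2 ht3) (sub_nonneg.2 h)]
end

section
/- Let n ≥ 6 be an integer, set ε = √((15n−16)/(5n−16)) − 1 and p = 1/(13(n−2)). Then (8(n−1)/(16n−1))·(2 + 3/ε) ≤ 2·((3 − √6 − 4p)/(√6 − 1 + 13p))·(6 − √6 − 13p)². -/
theorem C3_compare (n : ℕ) (hn : 6 ≤ n) :
    8 * ((n : ℝ) - 1) / (16 * n - 1) *
        (2 + 3 / (Real.sqrt ((15 * n - 16) / (5 * n - 16)) - 1)) ≤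
      2 * ((3 - Real.sqrt 6 - 4 * (1 / (13 * ((n : ℝ) - 2)))) /
          (Real.sqrt 6 - 1 + 13 * (1 / (13 * ((n : ℝ) - 2))))) *
        (6 - Real.sqrt 6 - 13 * (1 / (13 * ((n : ℝ) - 2)))) ^ 2 := by
  have hx : (6 : ℝ) ≤ n := by exact_mod_cast hn
  generalize (n : ℝ) = x at hx
  have hs1 : (2.4 : ℝ) ≤ Real.sqrt 6 := Real.le_sqrt_of_sq_le (by norm_num)
  have hs2 : Real.sqrt 6 ≤ 2.45 := Real.sqrt_le_iff.2 (by norm_num)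
  generalize Real.sqrt 6 = s at hs1 hs2
  have he : (1.7 : ℝ) ≤ Real.sqrt ((15 * x - 16) / (5 * x - 16)) := by
    apply Real.le_sqrt_of_sq_le
    rw [le_div_iff₀ (by linarith)]
    nlinarith
  generalize Real.sqrt ((15 * x - 16) / (5 * x - 16)) = r at he
  have hp0 : 0 ≤ 1 / (13 * (x - 2)) := by
    apply div_nonneg <;> linarith
  have hp : 1 / (13 * (x - 2)) ≤ 1 / 52 := by
    apply one_div_le_one_div_of_le <;> linarith
  generalize 1 / (13 * (x - 2)) = p at hp0 hp
  have h1 : 8 * (x - 1) / (16 * x - 1) ≤ 1 / 2 := by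
    rw [div_le_iff₀ (by linarith)]
    linarith
  have h2 : 3 / (r - 1) ≤ 5 := by
    rw [div_le_iff₀ (by linarith)]
    linarith
  have h20 : 0 ≤ 3 / (r - 1) := by
    apply div_nonneg <;> linarith
  have hL : 8 * (x - 1) / (16 * x - 1) * (2 + 3 / (r - 1)) ≤ 1 / 2 * 7 :=
    mul_le_mul h1 (by linarith) (by linarith) (by norm_num)
  have h3 : (1 / 4 : ℝ) ≤ (3 - s - 4 * p) / (s - 1 + 13 * p) := by
    rw [le_div_iff₀ (by linarith)]
    linarith
  have h4 : (9 : ℝ) ≤ (6 - s - 13 * p) ^ 2 := by nlinarith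
  have hR : 2 * (1 / 4 : ℝ) * 9 ≤
      2 * ((3 - s - 4 * p) / (s - 1 + 13 * p)) * (6 - s - 13 * p) ^ 2 :=
    mul_le_mul (by linarith) h4 (by norm_num) (by linarith)
  linarith
end
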